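/- For all x, y ∈ Δ_Γ with y ≠ e and xy ≠ e, one has ‖ξ_{xy} − ξ_y‖₂² ≤ 2 · w(x)/w(y), where xy denotes the product in the group Δ_Γ (pointwise multiplication). -/

import Mathlib

open Function

/-- A proper length function on a group. -/
structure IsProperLength {G : Type*} [Group G] (l : G → ℝ) : Prop where
  nonneg : ∀ s, 0 ≤ l s
  eq_zero_iff : ∀ s, l s = 0 ↔ s = 1
  mul_le : ∀ s t, l (s * t) ≤ l s + l t
  inv_eq : ∀ s, l s⁻¹ = l s
  proper : ∀ R : ℝ, {s : G | l s ≤ R}.Finite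

open Classical in
/-- `w(y,t) = l_Γ(t) + l_Δ(y t)` if `t ∈ supp y`, and `0` otherwise. -/
noncomputable def wt {Γ Δ : Type*} [Group Δ] (lG : Γ → ℝ) (lD : Δ → ℝ)
    (y : Γ → Δ) (t : Γ) : ℝ :=
  if y t ≠ 1 then lG t + lD (y t) else 0

/-- `w(y) = Σ_t w(y,t)`. -/
noncomputable def w {Γ Δ : Type*} [Group Δ] (lG : Γ → ℝ) (lD : Δ → ℝ)
    (y : Γ → Δ) : ℝ :=
  ∑ᶠ t, wt lG lD y t

/-- The coefficients of the unit vector `ξ_y ∈ ℓ²(Γ)`: `ξ_y(t) = (w(y,t)/w(y))^{1/2}`. -/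
noncomputable def xi {Γ Δ : Type*} [Group Δ] (lG : Γ → ℝ) (lD : Δ → ℝ)
    (y : Γ → Δ) (t : Γ) : ℝ :=
  Real.sqrt (wt lG lD y t / w lG lD y)

/-!
Let `p` and `q` be the probability vectors obtained by normalizing the weights of `xy` and `y`, so
that `ξ_{xy} = √p` and `ξ_y = √q`. Since `(√p - √q)² ≤ |p - q|`, it is enough to bound `‖p - q‖₁`.
The triangle inequality for `l_Δ` gives `|w(xy,t) - w(y,t)| ≤ w(x,t)`, so the two weights are at
`ℓ¹`-distance at most `w(x)`, and normalizing by the total masses turns this into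
`‖p - q‖₁ ≤ 2 w(x) / w(y)`.
-/

theorem sq_sqrt_sub_sqrt_le_abs_sub {p q : ℝ} (hp : 0 ≤ p) (hq : 0 ≤ q) :
    (√p - √q) ^ 2 ≤ |p - q| :=
  calc (√p - √q) ^ 2 = |√p - √q| * |√p - √q| := by rw [← sq_abs, sq]
    _ ≤ |√p - √q| * (√p + √q) := by
      gcongr
      exact abs_sub_le_of_nonneg_of_le (by positivity) (by simp) (by positivity) (by simp)
    _ = |(√p) ^ 2 - (√q) ^ 2| := by
      rw [sq_sub_sq, abs_mul, abs_of_nonneg (by positivity : 0 ≤ √p + √q), mul_comm]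
    _ = |p - q| := by rw [Real.sq_sqrt hp, Real.sq_sqrt hq]

section Normalize

variable {ι : Type*} {a b : ι → ℝ}

-- Passing from `a / ∑ a` to `b / ∑ b` through `a / ∑ b` changes first the scale and then the
-- entries; each change costs at most `(∑ |a - b|) / ∑ b`.
theorem tsum_abs_div_tsum_sub_div_tsum_le (ha₀ : ∀ i, 0 ≤ a i) (ha : Summable a) (hb : Summable b)
    (hA : 0 < ∑' i, a i) (hB : 0 < ∑' i, b i) :
    ∑' i, |a i / (∑' j, a j) - b i / (∑' j, b j)| ≤ 2 * (∑' i, |a i - b i|) / ∑' i, b i := by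
  have hdist : Summable fun i ↦ |a i - b i| := (ha.sub hb).abs
  have hmass : |∑' i, a i - ∑' i, b i| ≤ ∑' i, |a i - b i| := by
    rw [← ha.tsum_sub hb]
    simpa only [Real.norm_eq_abs] using norm_tsum_le_tsum_norm (ha.sub hb).norm
  generalize hA_eq : ∑' i, a i = A at *
  generalize ∑' i, b i = B at *
  have hscale : A * |A⁻¹ - B⁻¹| = |A - B| / B := by
    rw [inv_sub_inv hA.ne' hB.ne', abs_div, abs_sub_comm, abs_of_pos (mul_pos hA hB)]
    field_simp
  have hterm (i : ι) : |a i / A - b i / B| ≤ a i * |A⁻¹ - B⁻¹| + |a i - b i| / B :=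
    calc |a i / A - b i / B| = |a i * (A⁻¹ - B⁻¹) + (a i - b i) / B| := by ring_nf
      _ ≤ |a i * (A⁻¹ - B⁻¹)| + |(a i - b i) / B| := abs_add_le _ _
      _ = a i * |A⁻¹ - B⁻¹| + |a i - b i| / B := by
        rw [abs_mul, abs_div, abs_of_nonneg (ha₀ i), abs_of_pos hB]
  calc ∑' i, |a i / A - b i / B|
      ≤ ∑' i, (a i * |A⁻¹ - B⁻¹| + |a i - b i| / B) :=
        ((ha.div_const A).sub (hb.div_const B)).abs.tsum_le_tsum hterm
          ((ha.mul_right _).add (hdist.div_const B))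
    _ = A * |A⁻¹ - B⁻¹| + (∑' i, |a i - b i|) / B := by
        rw [(ha.mul_right _).tsum_add (hdist.div_const B), tsum_mul_right, tsum_div_const, hA_eq]
    _ = (|A - B| + ∑' i, |a i - b i|) / B := by rw [hscale, add_div]
    _ ≤ 2 * (∑' i, |a i - b i|) / B := by
        gcongr
        linarith

theorem tsum_sq_sqrt_div_tsum_sub_sqrt_div_tsum_le (ha₀ : ∀ i, 0 ≤ a i) (hb₀ : ∀ i, 0 ≤ b i)
    (ha : Summable a) (hb : Summable b) (hA : 0 < ∑' i, a i) (hB : 0 < ∑' i, b i) :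
    ∑' i, (√(a i / ∑' j, a j) - √(b i / ∑' j, b j)) ^ 2
      ≤ 2 * (∑' i, |a i - b i|) / ∑' i, b i := by
  have hterm (i : ι) : (√(a i / ∑' j, a j) - √(b i / ∑' j, b j)) ^ 2
      ≤ |a i / (∑' j, a j) - b i / (∑' j, b j)| :=
    sq_sqrt_sub_sqrt_le_abs_sub (div_nonneg (ha₀ i) hA.le) (div_nonneg (hb₀ i) hB.le)
  have hdist : Summable fun i ↦ |a i / (∑' j, a j) - b i / (∑' j, b j)| :=
    ((ha.div_const _).sub (hb.div_const _)).abs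
  exact ((hdist.of_nonneg_of_le (fun _ ↦ sq_nonneg _) hterm).tsum_le_tsum hterm hdist).trans
    (tsum_abs_div_tsum_sub_div_tsum_le ha₀ ha hb hA hB)

end Normalize

section Weight

variable {Γ Δ : Type*} [Group Δ] {y : Γ → Δ} {t : Γ}

theorem wt_of_eq_one (lG : Γ → ℝ) (lD : Δ → ℝ) (ht : y t = 1) : wt lG lD y t = 0 :=
  if_neg (not_not.2 ht)

theorem wt_of_ne_one (lG : Γ → ℝ) (lD : Δ → ℝ) (ht : y t ≠ 1) :
    wt lG lD y t = lG t + lD (y t) :=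
  if_pos ht

theorem hasFiniteSupport_wt (lG : Γ → ℝ) (lD : Δ → ℝ) (hy : (mulSupport y).Finite) :
    HasFiniteSupport (wt lG lD y) :=
  hy.subset fun _ ht hyt ↦ ht (wt_of_eq_one lG lD hyt)

theorem summable_wt (lG : Γ → ℝ) (lD : Δ → ℝ) (hy : (mulSupport y).Finite) :
    Summable (wt lG lD y) :=
  summable_of_hasFiniteSupport (hasFiniteSupport_wt lG lD hy)

theorem w_eq_tsum_wt (lG : Γ → ℝ) (lD : Δ → ℝ) (hy : (mulSupport y).Finite) :
    w lG lD y = ∑' t, wt lG lD y t :=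
  (tsum_eq_finsum (hasFiniteSupport_wt lG lD hy)).symm

variable {F : Type*} [FunLike F Δ ℝ] {lG : Γ → ℝ}

theorem wt_nonneg [GroupSeminormClass F Δ ℝ] (lD : F) (hG : ∀ t, 0 ≤ lG t) (y : Γ → Δ) (t : Γ) :
    0 ≤ wt lG lD y t := by
  by_cases ht : y t = 1
  · rw [wt_of_eq_one lG lD ht]
  · rw [wt_of_ne_one lG lD ht]
    exact add_nonneg (hG t) (apply_nonneg lD _)

theorem abs_wt_mul_sub_wt_le [GroupSeminormClass F Δ ℝ] (lD : F) (hG : ∀ t, 0 ≤ lG t)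
    (x y : Γ → Δ) (t : Γ) : |wt lG lD (x * y) t - wt lG lD y t| ≤ wt lG lD x t := by
  have hlip : |lD (x t * y t) - lD (y t)| ≤ lD (x t) := by
    simpa only [mul_div_cancel_right] using abs_sub_map_le_div lD (x t * y t) (y t)
  by_cases hx : x t = 1
  · have hxy : (x * y) t = y t := by rw [Pi.mul_apply, hx, one_mul]
    rw [wt_of_eq_one lG lD hx, wt, wt, hxy, sub_self, abs_zero]
  by_cases hy : y t = 1
  · have hxy : (x * y) t = x t := by rw [Pi.mul_apply, hy, mul_one]
    rw [wt_of_eq_one lG lD hy, sub_zero, abs_of_nonneg (wt_nonneg lD hG _ t), wt, wt, hxy]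
  rw [wt_of_ne_one lG lD hx]
  by_cases hxy : (x * y) t = 1
  · rw [← Pi.mul_apply, hxy, map_one_eq_zero, zero_sub, abs_neg,
      abs_of_nonneg (apply_nonneg lD _)] at hlip
    rw [wt_of_eq_one lG lD hxy, zero_sub, abs_neg, abs_of_nonneg (wt_nonneg lD hG _ t),
      wt_of_ne_one lG lD hy]
    gcongr
  · rw [wt_of_ne_one lG lD hxy, wt_of_ne_one lG lD hy, add_sub_add_left_eq_sub]
    exact hlip.trans (le_add_of_nonneg_left (hG t))

theorem w_pos [GroupNormClass F Δ ℝ] (lD : F) (hG : ∀ t, 0 ≤ lG t) (hy : (mulSupport y).Finite)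
    (hy1 : y ≠ 1) : 0 < w lG lD y := by
  obtain ⟨t, ht⟩ : ∃ t, y t ≠ 1 := Function.ne_iff.1 hy1
  refine finsum_pos (wt_nonneg lD hG y) ⟨t, ?_⟩ (hasFiniteSupport_wt lG lD hy)
  rw [wt_of_ne_one lG lD ht]
  exact add_pos_of_nonneg_of_pos (hG t) (map_pos_of_ne_one lD ht)

end Weight

theorem stmt2_general {Γ Δ F : Type*} [Group Δ] [FunLike F Δ ℝ] [GroupSeminormClass F Δ ℝ]
    (lG : Γ → ℝ) (lD : F) (hG : ∀ t, 0 ≤ lG t) (x y : Γ → Δ)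
    (hx : (mulSupport x).Finite) (hy : (mulSupport y).Finite)
    (hwy : 0 < w lG lD y) (hwxy : 0 < w lG lD (x * y)) :
    ∑' t, (xi lG lD (x * y) t - xi lG lD y t) ^ 2 ≤ 2 * w lG lD x / w lG lD y := by
  have hxy : (mulSupport (x * y)).Finite := (hx.union hy).subset (mulSupport_mul x y)
  have hsum := summable_wt lG lD hy
  have hsum' := summable_wt lG lD hxy
  have hdiff : ∑' t, |wt lG lD (x * y) t - wt lG lD y t| ≤ w lG lD x := by
    rw [w_eq_tsum_wt lG lD hx]
    exact (hsum'.sub hsum).abs.tsum_le_tsum (abs_wt_mul_sub_wt_le lD hG x y) (summable_wt lG lD hx)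
  calc ∑' t, (xi lG lD (x * y) t - xi lG lD y t) ^ 2
      ≤ 2 * (∑' t, |wt lG lD (x * y) t - wt lG lD y t|) / w lG lD y := by
        simp only [xi, w_eq_tsum_wt lG lD hxy, w_eq_tsum_wt lG lD hy] at hwy hwxy ⊢
        exact tsum_sq_sqrt_div_tsum_sub_sqrt_div_tsum_le (wt_nonneg lD hG _) (wt_nonneg lD hG _)
          hsum' hsum hwxy hwy
    _ ≤ 2 * w lG lD x / w lG lD y := by gcongr

/-- A proper length function as a bundled `GroupNorm`, Mathlib's notion of a length function. It
forgets properness and gives access to the lemmas on `GroupSeminormClass` and `GroupNormClass`. -/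
def IsProperLength.groupNorm {G : Type*} [Group G] {l : G → ℝ} (hl : IsProperLength l) :
    GroupNorm G where
  toFun := l
  map_one' := (hl.eq_zero_iff 1).2 rfl
  mul_le' := hl.mul_le
  inv' := hl.inv_eq
  eq_one_of_map_eq_zero' s := (hl.eq_zero_iff s).1

/-- For `x, y ∈ Δ_Γ` with `y ≠ e` and `xy ≠ e`,
`‖ξ_{xy} − ξ_y‖₂² ≤ 2 w(x)/w(y)`, where `xy` is the pointwise product in `Δ_Γ`. -/
theorem stmt2 {Γ Δ : Type*} [Group Γ] [Group Δ] [Countable Γ] [Countable Δ]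
    (lG : Γ → ℝ) (lD : Δ → ℝ) (hG : IsProperLength lG) (hD : IsProperLength lD)
    (x y : Γ → Δ) (hx : (mulSupport x).Finite) (hy : (mulSupport y).Finite)
    (hy1 : y ≠ 1) (hxy1 : x * y ≠ 1) :
    (∑' t : Γ, (xi lG lD (x * y) t - xi lG lD y t) ^ 2)
      ≤ 2 * w lG lD x / w lG lD y :=
  have hxy := (hx.union hy).subset (mulSupport_mul x y)
  stmt2_general lG hD.groupNorm hG.nonneg x y hx hy (w_pos hD.groupNorm hG.nonneg hy hy1)
    (w_pos hD.groupNorm hG.nonneg hxy hxy1)
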